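/- Unique parameterization of multiplicative evaluation contexts: if P ∈ Em_{U,A} and P ∈ Em_{U',A'} then U = U' and A = A'. -/

import Mathlib

/-! ## Terms of the pure λ-calculus (named syntax) -/

inductive Term : Type
  | var : ℕ → Term
  | lam : ℕ → Term → Term
  | app : Term → Term → Term
  deriving DecidableEq

namespace Term

/-- Size of a term: |x| = 1, |λx.t| = |t|+1, |t u| = |t|+|u|+1. -/
def size : Term → ℕ
  | var _ => 1
  | lam _ t => size t + 1
  | app t u => size t + size u + 1

/-- Free variables of a term. -/
def fv : Term → Finset ℕ
  | var x => {x}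
  | lam x t => (fv t).erase x
  | app t u => fv t ∪ fv u

/-- Meta-level substitution t{x←u}. -/
def subst (x : ℕ) (u : Term) : Term → Term
  | var y => if y = x then u else var y
  | lam y t => if y = x then lam y t else lam y (subst x u t)
  | app t s => app (subst x u t) (subst x u s)

def isVarB : Term → Bool
  | var _ => true
  | _ => false

/-- Values are abstractions (variables are not values). -/
def IsValue (t : Term) : Prop := ∃ x u, t = lam x u

/-- Needed variables of a term. -/
def nv : Term → Finset ℕ
  | var x => {x}
  | lam _ _ => ∅
  | app t u => nv t ∪ nv u

/-- Applied variables of a term. -/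
def anv : Term → Finset ℕ
  | var _ => ∅
  | lam _ _ => ∅
  | app (var x) u => insert x (anv u)
  | app (lam y t) u => anv (lam y t) ∪ anv u
  | app (app t s) u => anv (app t s) ∪ anv u

/-- Unapplied variables of a term. -/
def unv : Term → Finset ℕ
  | var x => {x}
  | lam _ _ => ∅
  | app (var _) u => unv u
  | app (lam y t) u => unv (lam y t) ∪ unv u
  | app (app t s) u => unv (app t s) ∪ unv u

end Term

/-! ## Inert terms and fireballs: i ::= x | i f,  f ::= v | i -/

mutual
  inductive Term.Inert : Term → Prop
    | var (x : ℕ) : Term.Inert (Term.var x)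
    | app {i f : Term} : Term.Inert i → Term.Fireball f → Term.Inert (Term.app i f)
  inductive Term.Fireball : Term → Prop
    | val {x : ℕ} {t : Term} : Term.Fireball (Term.lam x t)
    | inert {i : Term} : Term.Inert i → Term.Fireball i
end

/-- Non-variable inert terms i⁺. -/
def Term.InertPlus (t : Term) : Prop := t.Inert ∧ ∀ x, t ≠ Term.var x

/-! ## β-reduction (closure of the root rule under arbitrary term contexts) -/

inductive Beta : Term → Term → Prop
  | beta (x : ℕ) (t u : Term) : Beta (Term.app (Term.lam x t) u) (Term.subst x u t)
  | lam {t t' : Term} (x : ℕ) : Beta t t' → Beta (Term.lam x t) (Term.lam x t')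
  | appL {t t' : Term} (u : Term) : Beta t t' → Beta (Term.app t u) (Term.app t' u)
  | appR {u u' : Term} (t : Term) : Beta u u' → Beta (Term.app t u) (Term.app t u')

/-- `iterRel R n a b`: an n-step R-reduction sequence from a to b. -/
def iterRel {α : Type} (R : α → α → Prop) : ℕ → α → α → Prop
  | 0 => Eq
  | n + 1 => fun a c => ∃ b, R a b ∧ iterRel R n b c

/-! ## Environments and programs -/

/-- Environments are finite lists of explicit substitutions, written
left-to-right, i.e. E[x←t] is `E ++ [(x, t)]`. -/
abbrev Env := List (ℕ × Term)

def Env.dom (E : Env) : Finset ℕ := (E.map Prod.fst).toFinset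

/-- Content of the leftmost explicit substitution on x. -/
def Env.lookupES : Env → ℕ → Option Term
  | [], _ => none
  | (y, t) :: E, x => if y = x then some t else Env.lookupES E x

structure Program where
  tm : Term
  env : Env

/-- p@[x←u] : appending an explicit substitution at the end of the environment. -/
def Program.appES (p : Program) (x : ℕ) (u : Term) : Program := ⟨p.tm, p.env ++ [(x, u)]⟩

/-- One step of the needed-variables computation along an explicit substitution. -/
def nvStep (V : Finset ℕ) (e : ℕ × Term) : Finset ℕ :=
  if e.1 ∈ V then (V.erase e.1) ∪ Term.nv e.2 else V

/-- Needed variables of a program. -/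
def Program.nv (p : Program) : Finset ℕ := p.env.foldl nvStep p.tm.nv

/-- One step of the applied-variables computation (carrying needed variables). -/
def anvStep : Finset ℕ × Finset ℕ → ℕ × Term → Finset ℕ × Finset ℕ
  | (N, A), (x, u) =>
    (nvStep N (x, u),
      if x ∈ N then
        match u with
        | Term.var y => if x ∈ A then (A.erase x) ∪ {y} else A.erase x
        | _ => (A.erase x) ∪ Term.anv u
      else A)

/-- Applied variables of a program. -/
def Program.anv (p : Program) : Finset ℕ :=
  (p.env.foldl anvStep (p.tm.nv, p.tm.anv)).2

/-- One step of the unapplied-variables computation (carrying needed variables). -/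
def unvStep : Finset ℕ × Finset ℕ → ℕ × Term → Finset ℕ × Finset ℕ
  | (N, U), (x, u) =>
    (nvStep N (x, u),
      if x ∈ U ∨ (x ∈ N ∧ u.isVarB = false) then (U.erase x) ∪ Term.unv u else U)

/-- Unapplied variables of a program. -/
def Program.unv (p : Program) : Finset ℕ :=
  (p.env.foldl unvStep (p.tm.nv, p.tm.unv)).2

/-- Unfolding of a program into a term: unf(t, ε) = t, unf(t, E[x←u]) = unf(t, E){x←u}. -/
def Program.unf (p : Program) : Term :=
  p.env.foldl (fun s e => Term.subst e.1 e.2 s) p.tm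

/-! ## Term contexts H ::= ⟨·⟩ | H t | i H (i inert, enforced by WF) -/

inductive HCtx : Type
  | hole : HCtx
  | appL : HCtx → Term → HCtx
  | appR : Term → HCtx → HCtx

namespace HCtx

/-- Well-formedness: in i H, the left part i must be an inert term. -/
def WF : HCtx → Prop
  | hole => True
  | appL H _ => WF H
  | appR i H => Term.Inert i ∧ WF H

def plug : HCtx → Term → Term
  | hole, t => t
  | appL H u, t => Term.app (plug H t) u
  | appR i H, t => Term.app i (plug H t)

def nv : HCtx → Finset ℕ
  | hole => ∅
  | appL H _ => nv H
  | appR i H => Term.nv i ∪ nv H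

def anv : HCtx → Finset ℕ
  | hole => ∅
  | appL H _ => anv H
  | appR i H => Term.anv i ∪ anv H

def unv : HCtx → Finset ℕ
  | hole => ∅
  | appL H _ => unv H
  | appR i H => Term.unv i ∪ unv H

end HCtx

/-- Applicative term contexts H@ ::= ⟨·⟩ t | H@ t | i H@. -/
inductive HCtx.IsApp : HCtx → Prop
  | base (t : Term) : HCtx.IsApp (HCtx.appL HCtx.hole t)
  | appL {H : HCtx} (t : Term) : HCtx.IsApp H → HCtx.IsApp (HCtx.appL H t)
  | appR {H : HCtx} {i : Term} : Term.Inert i → HCtx.IsApp H → HCtx.IsApp (HCtx.appR i H)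

/-! ## Program contexts: hole in the term part (tc) or inside an ES (ec) -/

inductive PCtx : Type
  | tc : HCtx → Env → PCtx
  | ec : Term → Env → ℕ → HCtx → Env → PCtx

namespace PCtx

/-- P@[x←u] : appending an explicit substitution at the end of the environment of P. -/
def appES : PCtx → ℕ → Term → PCtx
  | tc H E, x, u => tc H (E ++ [(x, u)])
  | ec t E1 y H E2, x, u => ec t E1 y H (E2 ++ [(x, u)])

/-- Plugging a term into a program context. -/
def plugT : PCtx → Term → Program
  | tc H E, t => ⟨H.plug t, E⟩
  | ec u E1 x H E2, t => ⟨u, E1 ++ (x, H.plug t) :: E2⟩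

/-- Plugging a program into a program context: the plugged environment is appended
right after the position of the hole. -/
def plugP : PCtx → Program → Program
  | tc H E, q => ⟨H.plug q.tm, q.env ++ E⟩
  | ec u E1 x H E2, q => ⟨u, E1 ++ (x, H.plug q.tm) :: (q.env ++ E2)⟩

/-- Variables bound by the environment of P. -/
def dom : PCtx → Finset ℕ
  | tc _ E => Env.dom E
  | ec _ E1 y _ E2 => insert y (Env.dom E1 ∪ Env.dom E2)

/-- P(x): content of the leftmost explicit substitution on x occurring after the hole. -/
def lookup : PCtx → ℕ → Option Term
  | tc _ E, x => Env.lookupES E x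
  | ec _ _ _ _ E2, x => Env.lookupES E2 x

/-- (P⟨x⟩)@[x←H] : plug the variable x in the hole of P and append the ES [x←H],
whose content H now contains the hole. -/
def hered (P : PCtx) (x : ℕ) (H : HCtx) : PCtx :=
  ec (P.plugT (Term.var x)).tm (P.plugT (Term.var x)).env x H []

end PCtx

/-! ## Open CbNeed evaluation contexts P ∈ E_V -/

inductive OEC : PCtx → Finset ℕ → Prop
  | ax {H : HCtx} : H.WF → OEC (PCtx.tc H []) H.nv
  | gc {P : PCtx} {V : Finset ℕ} {x : ℕ} (t : Term) :
      OEC P V → x ∉ V → x ∉ P.dom → OEC (P.appES x t) V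
  | inert {P : PCtx} {V : Finset ℕ} {x : ℕ} {i : Term} :
      OEC P V → x ∈ V → Term.Inert i → x ∉ P.dom →
      OEC (P.appES x i) ((V.erase x) ∪ i.nv)
  | her {P : PCtx} {V : Finset ℕ} {x : ℕ} {H : HCtx} :
      OEC P V → x ∉ V → x ∉ P.dom → H.WF →
      OEC (P.hered x H) (V ∪ H.nv)

/-! ## Open CbNeed reduction -/

inductive StepOM : Program → Program → Prop
  | mk {P : PCtx} {V : Finset ℕ} {x : ℕ} {t u : Term} :
      OEC P V →
      StepOM (P.plugT (Term.app (Term.lam x t) u)) (P.plugP ⟨t, [(x, u)]⟩)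

inductive StepOE : Program → Program → Prop
  | mk {P : PCtx} {V : Finset ℕ} {x : ℕ} {v : Term} :
      OEC P V → P.lookup x = some v → v.IsValue →
      StepOE (P.plugT (Term.var x)) (P.plugT v)

def StepOnd (p q : Program) : Prop := StepOM p q ∨ StepOE p q

/-! ## Open CbNeed normal programs -/

inductive PInert : Program → Prop
  | ax {i : Term} : i.Inert → PInert ⟨i, []⟩
  | inert {p : Program} {x : ℕ} {i : Term} :
      PInert p → x ∈ p.nv → i.Inert → PInert (p.appES x i)
  | gc {p : Program} {x : ℕ} (t : Term) :
      PInert p → x ∉ p.nv → PInert (p.appES x t)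

inductive PAbs : Program → Prop
  | ax {v : Term} : v.IsValue → PAbs ⟨v, []⟩
  | gc {p : Program} {x : ℕ} (t : Term) : PAbs p → PAbs (p.appES x t)

def ONorm (p : Program) : Prop := PInert p ∨ PAbs p

/-! ## Useful Open CbNeed: multiplicative and exponential evaluation contexts -/

def upd (S : Finset ℕ) (x y : ℕ) : Finset ℕ := if x ∈ S then (S.erase x) ∪ {y} else S

inductive MEC : PCtx → Finset ℕ → Finset ℕ → Prop
  | ax {H : HCtx} : H.WF → MEC (PCtx.tc H []) H.unv H.anv
  | var {P : PCtx} {U A : Finset ℕ} {x y : ℕ} :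
      MEC P U A → x ∈ U ∪ A → x ∉ P.dom →
      MEC (P.appES x (Term.var y)) (upd U x y) (upd A x y)
  | gc {P : PCtx} {U A : Finset ℕ} {x : ℕ} (t : Term) :
      MEC P U A → x ∉ U ∪ A → x ∉ P.dom → MEC (P.appES x t) U A
  | inert {P : PCtx} {U A : Finset ℕ} {x : ℕ} {i : Term} :
      MEC P U A → x ∈ U ∪ A → i.InertPlus → x ∉ P.dom →
      MEC (P.appES x i) ((U.erase x) ∪ i.unv) ((A.erase x) ∪ i.anv)
  | val {P : PCtx} {U A : Finset ℕ} {x : ℕ} {v : Term} :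
      MEC P U A → x ∈ U → x ∉ A → v.IsValue → x ∉ P.dom →
      MEC (P.appES x v) (U.erase x) A
  | her {P : PCtx} {U A : Finset ℕ} {x : ℕ} {H : HCtx} :
      MEC P U A → x ∉ U ∪ A → x ∉ P.dom → H.WF →
      MEC (P.hered x H) (U ∪ H.unv) (A ∪ H.anv)

/-- Exponential evaluation contexts P ∈ E@_{U,A}; the last (natural number) index
counts the number of applications of rule (e_NA) in the derivation. -/
inductive EEC : PCtx → Finset ℕ → Finset ℕ → ℕ → Prop
  | ax1 {H : HCtx} : H.IsApp → EEC (PCtx.tc H []) H.unv H.anv 0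
  | ax2 {P : PCtx} {U A : Finset ℕ} {x : ℕ} {H : HCtx} :
      MEC P U A → x ∉ U ∪ A → x ∉ P.dom → H.IsApp →
      EEC (P.hered x H) ((U.erase x) ∪ H.unv) (A ∪ H.anv) 0
  | var {P : PCtx} {U A : Finset ℕ} {k : ℕ} {x y : ℕ} :
      EEC P U A k → x ∈ U ∪ A → x ∉ P.dom →
      EEC (P.appES x (Term.var y)) (upd U x y) (upd A x y) k
  | inert {P : PCtx} {U A : Finset ℕ} {k : ℕ} {x : ℕ} {i : Term} :
      EEC P U A k → x ∈ U ∪ A → i.InertPlus → x ∉ P.dom →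
      EEC (P.appES x i) ((U.erase x) ∪ i.unv) ((A.erase x) ∪ i.anv) k
  | gc {P : PCtx} {U A : Finset ℕ} {k : ℕ} {x : ℕ} (t : Term) :
      EEC P U A k → x ∉ U ∪ A → x ∉ P.dom → EEC (P.appES x t) U A k
  | val {P : PCtx} {U A : Finset ℕ} {k : ℕ} {x : ℕ} {v : Term} :
      EEC P U A k → x ∈ U → x ∉ A → v.IsValue → x ∉ P.dom →
      EEC (P.appES x v) (U.erase x) A k
  | na {P : PCtx} {U A : Finset ℕ} {k : ℕ} {x : ℕ} :
      EEC P U A k → x ∉ A → x ∉ P.dom →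
      EEC (P.hered x HCtx.hole) (U.erase x) A (k + 1)

/-! ## Useful Open CbNeed reduction -/

inductive StepUM : Program → Program → Prop
  | mk {P : PCtx} {U A : Finset ℕ} {x : ℕ} {t u : Term} :
      MEC P U A →
      StepUM (P.plugT (Term.app (Term.lam x t) u)) (P.plugP ⟨t, [(x, u)]⟩)

inductive StepUE : Program → Program → Prop
  | mk {P : PCtx} {U A : Finset ℕ} {k : ℕ} {x : ℕ} {v : Term} :
      EEC P U A k → P.lookup x = some v → v.IsValue →
      StepUE (P.plugT (Term.var x)) (P.plugT v)

def StepUnd (p q : Program) : Prop := StepUM p q ∨ StepUE p q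

/-- Useful multiplicative steps whose evaluation context lies in Em_{U,A}. -/
def StepUMat (U A : Finset ℕ) (p q : Program) : Prop :=
  ∃ (P : PCtx) (x : ℕ) (t u : Term), MEC P U A ∧
    p = P.plugT (Term.app (Term.lam x t) u) ∧ q = P.plugP ⟨t, [(x, u)]⟩

/-- Useful exponential steps whose evaluation context lies in E@_{U,A}. -/
def StepUEat (U A : Finset ℕ) (p q : Program) : Prop :=
  ∃ (P : PCtx) (k : ℕ) (x : ℕ) (v : Term), EEC P U A k ∧
    P.lookup x = some v ∧ v.IsValue ∧
    p = P.plugT (Term.var x) ∧ q = P.plugT v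

/-! ## Useful normal-form predicates -/

inductive GenVar : ℕ → Program → Prop
  | ax (x : ℕ) : GenVar x ⟨Term.var x, []⟩
  | her {x : ℕ} {p : Program} (y : ℕ) : GenVar x p → GenVar y (p.appES x (Term.var y))
  | gc {x z : ℕ} {p : Program} (t : Term) : GenVar x p → z ≠ x → GenVar x (p.appES z t)

inductive UfAbs : Program → Prop
  | ax {v : Term} : v.IsValue → UfAbs ⟨v, []⟩
  | gv {p : Program} {x : ℕ} {v : Term} : GenVar x p → v.IsValue → UfAbs (p.appES x v)
  | gc {p : Program} {x : ℕ} (t : Term) : UfAbs p → UfAbs (p.appES x t)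

inductive UfInert : Program → Prop
  | ax {i : Term} : i.InertPlus → UfInert ⟨i, []⟩
  | gv {p : Program} {x : ℕ} {i : Term} : GenVar x p → i.InertPlus → UfInert (p.appES x i)
  | inert {p : Program} {x : ℕ} {i : Term} :
      UfInert p → x ∈ p.nv → i.Inert → UfInert (p.appES x i)
  | useless {p : Program} {x : ℕ} {v : Term} :
      UfInert p → x ∈ p.unv → x ∉ p.anv → v.IsValue → UfInert (p.appES x v)
  | gc {p : Program} {x : ℕ} (t : Term) : UfInert p → x ∉ p.nv → UfInert (p.appES x t)

def UfNorm (p : Program) : Prop := UfInert p ∨ UfAbs p ∨ ∃ x, GenVar x p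

/-! ## The size-exploding family -/

/-- t₁ := λx.λy. y x x  (x := 0, y := 1). -/
def t1 : Term := Term.lam 0 (Term.lam 1 (Term.app (Term.app (Term.var 1) (Term.var 0)) (Term.var 0)))

/-- λy. y x x. -/
def tbody : Term := Term.lam 1 (Term.app (Term.app (Term.var 1) (Term.var 0)) (Term.var 0))

/-- The family t_n (values for n ≥ 1; tfam 0 is a dummy). -/
def tfam : ℕ → Term
  | 0 => t1
  | 1 => t1
  | n + 2 => Term.lam 0 (Term.app (tfam (n + 1)) tbody)

/-- I := λz.z. -/
def Idt : Term := Term.lam 2 (Term.var 2)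

/-- The family u_n : u₀ = I, u_{n+1} = λy. y u_n u_n. -/
def ufam : ℕ → Term
  | 0 => Idt
  | n + 1 => Term.lam 1 (Term.app (Term.app (Term.var 1) (ufam n)) (ufam n))

/-! Every rule that appends an explicit substitution `[x←t]` updates the pair `(U, A)` by one and
the same function of `x` and `t`, whose effect on `U ∪ A` is the needed-variables step `nvStep`.
The only ambiguity is thus in the hereditary rule, whose conclusion records `P⟨x⟩` but not `P`. It
is resolved by comparing holes: if `P⟨x⟩ = P'⟨x'⟩`, then either the holes coincide, or one of them
precedes the other and the variable filling it is needed by the context of the other. The side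
condition `x ∉ U ∪ A` of the hereditary rule excludes the latter. -/

theorem Term.unv_union_anv (t : Term) : t.unv ∪ t.anv = t.nv := by
  induction t with
  | var | lam => simp [nv, unv, anv]
  | app t u iht ihu => cases t <;> grind [nv, unv, anv]

namespace HCtx

theorem unv_union_anv (H : HCtx) : H.unv ∪ H.anv = H.nv := by
  induction H with
  | hole => simp [nv, unv, anv]
  | appL _ _ ih => exact ih
  | appR i H ih => grind [nv, unv, anv, Term.unv_union_anv]

theorem mem_nv_plug_var (H : HCtx) (x : ℕ) : x ∈ (H.plug (Term.var x)).nv := by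
  induction H <;> simp_all [plug, Term.nv]

theorem eq_or_mem_nv_of_plug_var_eq {H H' : HCtx} {x x' : ℕ}
    (h : H.plug (Term.var x) = H'.plug (Term.var x')) :
    (H = H' ∧ x = x') ∨ x ∈ H'.nv ∨ x' ∈ H.nv := by
  induction H generalizing H' with
  | hole => cases H' <;> simp_all [plug]
  | appL H t ih =>
    cases H' with
    | hole => simp [plug] at h
    | appL H' t' => grind [plug, nv]
    | appR i H' =>
      obtain ⟨rfl, -⟩ := Term.app.inj h
      exact .inr (.inl (Finset.mem_union_left _ (H.mem_nv_plug_var x)))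
  | appR i H ih =>
    cases H' with
    | hole => simp [plug] at h
    | appL H' t' =>
      obtain ⟨rfl, -⟩ := Term.app.inj h
      exact .inr (.inr (Finset.mem_union_left _ (H'.mem_nv_plug_var x')))
    | appR i' H' => grind [plug, nv]

end HCtx

namespace Program

theorem appES_inj {p q : Program} {x y : ℕ} {t u : Term} :
    p.appES x t = q.appES y u ↔ p = q ∧ x = y ∧ t = u := by
  cases p
  cases q
  simp [appES, and_assoc]

theorem appES_ne_nil {p : Program} {x : ℕ} {t u : Term} : p.appES x t ≠ ⟨u, []⟩ := by
  simp [appES]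

end Program

namespace PCtx

theorem plugT_appES (P : PCtx) (x : ℕ) (t s : Term) :
    (P.appES x t).plugT s = (P.plugT s).appES x t := by
  cases P <;> simp [appES, plugT, Program.appES]

theorem plugT_hered (P : PCtx) (x : ℕ) (H : HCtx) (s : Term) :
    (P.hered x H).plugT s = (P.plugT (Term.var x)).appES x (H.plug s) :=
  rfl

theorem dom_appES (P : PCtx) (x : ℕ) (t : Term) : (P.appES x t).dom = insert x P.dom := by
  cases P <;> ext <;> simp [appES, dom, Env.dom, or_left_comm]

theorem dom_hered (P : PCtx) (x : ℕ) (H : HCtx) : (P.hered x H).dom = insert x P.dom := by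
  cases P <;> ext <;> simp [hered, plugT, dom, Env.dom]

theorem appES_inj {P Q : PCtx} {x y : ℕ} {t u : Term} :
    P.appES x t = Q.appES y u ↔ P = Q ∧ x = y ∧ t = u := by
  cases P <;> cases Q <;> simp [appES, and_assoc]

theorem hered_inj {P Q : PCtx} {x y : ℕ} {H K : HCtx} :
    P.hered x H = Q.hered y K ↔ P.plugT (Term.var x) = Q.plugT (Term.var y) ∧ x = y ∧ H = K := by
  cases hP : P.plugT (Term.var x)
  cases hQ : Q.plugT (Term.var y)
  simp [hered, hP, hQ, and_assoc]

theorem appES_ne_tc_nil {P : PCtx} {x : ℕ} {t : Term} {H : HCtx} : P.appES x t ≠ tc H [] := by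
  cases P <;> simp [appES]

theorem hered_ne_tc_nil {P : PCtx} {x : ℕ} {H K : HCtx} : P.hered x H ≠ tc K [] :=
  PCtx.noConfusion

theorem appES_ne_hered {P Q : PCtx} {x y : ℕ} {t : Term} {H : HCtx} :
    P.appES x t ≠ Q.hered y H := by
  cases P <;> simp [appES, hered]

end PCtx

theorem mem_nvStep_of_mem_of_ne {V : Finset ℕ} {x y : ℕ} (hy : y ∈ V) (hne : y ≠ x) (t : Term) :
    y ∈ nvStep V (x, t) := by
  grind [nvStep]

theorem mem_nvStep_of_mem_nv {V : Finset ℕ} {x y : ℕ} {t : Term} (hx : x ∈ V) (hy : y ∈ t.nv) :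
    y ∈ nvStep V (x, t) := by
  grind [nvStep]

/-- The unapplied variables after appending `[x←t]` to a context of parameters `U` and `A`: the
common form of the rules (m_var), (m_gc), (m_I) and (m_U). The last of them falls under the second
clause because abstractions have neither unapplied nor applied variables. -/
def unvES (U A : Finset ℕ) (x : ℕ) : Term → Finset ℕ
  | Term.var y => upd U x y
  | t => if x ∈ U ∪ A then U.erase x ∪ t.unv else U

/-- The applied variables after appending `[x←t]` to a context of parameters `U` and `A`: the
common form of the rules (m_var), (m_gc), (m_I) and (m_U). The last of them falls under the second
clause because abstractions have neither unapplied nor applied variables. -/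
def anvES (U A : Finset ℕ) (x : ℕ) : Term → Finset ℕ
  | Term.var y => upd A x y
  | t => if x ∈ U ∪ A then A.erase x ∪ t.anv else A

theorem unvES_union_anvES (U A : Finset ℕ) (x : ℕ) (t : Term) :
    unvES U A x t ∪ anvES U A x t = nvStep (U ∪ A) (x, t) := by
  cases t <;> grind [unvES, anvES, upd, nvStep, Term.nv, Term.unv_union_anv]

section ParameterStep

variable {U A : Finset ℕ} {x : ℕ}

theorem unvES_of_notMem (hx : x ∉ U ∪ A) (t : Term) : unvES U A x t = U := by
  cases t <;> grind [unvES, upd]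

theorem anvES_of_notMem (hx : x ∉ U ∪ A) (t : Term) : anvES U A x t = A := by
  cases t <;> grind [anvES, upd]

theorem unvES_of_mem {t : Term} (hx : x ∈ U ∪ A) (ht : ∀ y, t ≠ Term.var y) :
    unvES U A x t = U.erase x ∪ t.unv := by
  cases t <;> grind [unvES]

theorem anvES_of_mem {t : Term} (hx : x ∈ U ∪ A) (ht : ∀ y, t ≠ Term.var y) :
    anvES U A x t = A.erase x ∪ t.anv := by
  cases t <;> grind [anvES]

theorem unvES_lam_of_mem (hx : x ∈ U) (y : ℕ) (t : Term) :
    unvES U A x (Term.lam y t) = U.erase x := by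
  grind [unvES, Term.unv]

theorem anvES_lam_of_notMem (hx : x ∉ A) (y : ℕ) (t : Term) :
    anvES U A x (Term.lam y t) = A := by
  grind [anvES, Term.anv]

end ParameterStep

/-- Multiplicative evaluation contexts without any restriction on the shape of the terms and term
contexts involved: a value may be appended for an applied variable, and the left part `i` of a term
context `i H` need not be inert. The rules (m_var), (m_gc), (m_I) and (m_U) are merged into `appES`,
where the appended variable need not be fresh. -/
inductive RelaxedMEC : PCtx → Finset ℕ → Finset ℕ → Prop
  | ax (H : HCtx) : RelaxedMEC (PCtx.tc H []) H.unv H.anv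
  | appES {P : PCtx} {U A : Finset ℕ} (x : ℕ) (t : Term) :
      RelaxedMEC P U A → RelaxedMEC (P.appES x t) (unvES U A x t) (anvES U A x t)
  | hered {P : PCtx} {U A : Finset ℕ} {x : ℕ} (H : HCtx) :
      RelaxedMEC P U A → x ∉ U ∪ A → x ∉ P.dom →
      RelaxedMEC (P.hered x H) (U ∪ H.unv) (A ∪ H.anv)

theorem MEC.relaxed {P : PCtx} {U A : Finset ℕ} (h : MEC P U A) : RelaxedMEC P U A := by
  induction h with
  | ax => exact .ax _
  | var _ _ _ ih => exact ih.appES _ _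
  | @gc _ _ _ x t _ hx _ ih =>
    simpa only [unvES_of_notMem hx, anvES_of_notMem hx] using ih.appES x t
  | @inert _ _ _ x i _ hx hi _ ih =>
    simpa only [unvES_of_mem hx hi.2, anvES_of_mem hx hi.2] using ih.appES x i
  | @val _ _ _ x _ _ hU hA hv _ ih =>
    obtain ⟨y, t, rfl⟩ := hv
    simpa only [unvES_lam_of_mem hU, anvES_lam_of_notMem hA] using ih.appES x (Term.lam y t)
  | her _ hx hdom _ ih => exact ih.hered _ hx hdom

namespace RelaxedMEC

variable {P P' : PCtx} {U A U' A' : Finset ℕ} {x x' : ℕ}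

theorem eq_or_mem_of_plugT_var_eq (h : RelaxedMEC P U A) (h' : RelaxedMEC P' U' A')
    (hplug : P.plugT (Term.var x) = P'.plugT (Term.var x')) (hx : x ∉ P.dom) (hx' : x' ∉ P'.dom) :
    (P = P' ∧ x = x') ∨ x ∈ U' ∪ A' ∨ x' ∈ U ∪ A := by
  induction h generalizing P' U' A' x x' with
  | ax H =>
    cases h' with
    | ax H' =>
      simp only [HCtx.unv_union_anv]
      simpa using HCtx.eq_or_mem_nv_of_plug_var_eq (Program.mk.inj hplug).1
    | appES => exact absurd (PCtx.plugT_appES .. ▸ hplug.symm) Program.appES_ne_nil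
    | hered => exact absurd hplug.symm Program.appES_ne_nil
  | @appES P U A z t _ ih =>
    simp only [PCtx.plugT_appES, PCtx.dom_appES, Finset.mem_insert, not_or] at hplug hx
    cases h' with
    | ax => exact absurd hplug Program.appES_ne_nil
    | appES z' t' h' =>
      simp only [PCtx.plugT_appES, PCtx.dom_appES, Finset.mem_insert, not_or] at hplug hx'
      obtain ⟨hpre, rfl, rfl⟩ := Program.appES_inj.mp hplug
      rw [unvES_union_anvES, unvES_union_anvES]
      exact (ih h' hpre hx.2 hx'.2).imp (fun ⟨hP, hxx'⟩ => ⟨hP ▸ rfl, hxx'⟩)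
        (.imp (mem_nvStep_of_mem_of_ne · hx.1 _) (mem_nvStep_of_mem_of_ne · hx'.1 _))
    | hered H' h' _ hz' =>
      obtain ⟨hpre, rfl, rfl⟩ := Program.appES_inj.mp hplug
      rw [unvES_union_anvES, Finset.union_union_union_comm]
      exact .inr <| (ih h' hpre hx.2 hz').elim (fun hxz => absurd hxz.2 hx.1)
        (.imp (Finset.mem_union_left _) (mem_nvStep_of_mem_nv · (H'.mem_nv_plug_var x')))
  | @hered P U A z H _ hzUA hz ih =>
    simp only [PCtx.plugT_hered, PCtx.dom_hered, Finset.mem_insert, not_or] at hplug hx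
    cases h' with
    | ax => exact absurd hplug Program.appES_ne_nil
    | appES z' t' h' =>
      simp only [PCtx.plugT_appES, PCtx.dom_appES, Finset.mem_insert, not_or] at hplug hx'
      obtain ⟨hpre, rfl, rfl⟩ := Program.appES_inj.mp hplug
      rw [unvES_union_anvES, Finset.union_union_union_comm U]
      exact .inr <| (ih h' hpre hz hx'.2).elim (fun hzx' => absurd hzx'.2.symm hx'.1)
        (.imp (mem_nvStep_of_mem_nv · (H.mem_nv_plug_var x)) (Finset.mem_union_left _))
    | hered H' h' hzUA' hz' =>
      obtain ⟨hpre, rfl, hterm⟩ := Program.appES_inj.mp hplug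
      obtain ⟨rfl, -⟩ := (ih h' hpre hz hz').resolve_right (not_or.mpr ⟨hzUA', hzUA⟩)
      simp only [Finset.union_union_union_comm, HCtx.unv_union_anv]
      exact (HCtx.eq_or_mem_nv_of_plug_var_eq hterm).imp (fun ⟨hH, hxx'⟩ => ⟨hH ▸ rfl, hxx'⟩)
        (.imp (Finset.mem_union_right _) (Finset.mem_union_right _))

theorem eq_of_plugT_var_eq (h : RelaxedMEC P U A) (h' : RelaxedMEC P' U' A')
    (hplug : P.plugT (Term.var x) = P'.plugT (Term.var x))
    (hx : x ∉ P.dom) (hx' : x ∉ P'.dom) (hUA : x ∉ U ∪ A) (hUA' : x ∉ U' ∪ A') : P = P' :=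
  ((eq_or_mem_of_plugT_var_eq h h' hplug hx hx').resolve_right (not_or.mpr ⟨hUA', hUA⟩)).1

theorem eq_of_tc_nil {H : HCtx} (h : RelaxedMEC (PCtx.tc H []) U A) :
    U = H.unv ∧ A = H.anv := by
  generalize hQ : PCtx.tc H [] = Q at h
  cases h with
  | ax =>
    cases hQ
    exact ⟨rfl, rfl⟩
  | appES => exact absurd hQ.symm PCtx.appES_ne_tc_nil
  | hered => exact absurd hQ.symm PCtx.hered_ne_tc_nil

theorem exists_of_appES {t : Term} (h : RelaxedMEC (P.appES x t) U' A') :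
    ∃ U A, RelaxedMEC P U A ∧ U' = unvES U A x t ∧ A' = anvES U A x t := by
  generalize hQ : P.appES x t = Q at h
  cases h with
  | ax => exact absurd hQ PCtx.appES_ne_tc_nil
  | appES y u h =>
    obtain ⟨rfl, rfl, rfl⟩ := PCtx.appES_inj.mp hQ
    exact ⟨_, _, h, rfl, rfl⟩
  | hered => exact absurd hQ PCtx.appES_ne_hered

theorem exists_of_hered {H : HCtx} (h : RelaxedMEC (P.hered x H) U' A') :
    ∃ Q U A, RelaxedMEC Q U A ∧ P.plugT (Term.var x) = Q.plugT (Term.var x) ∧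
      x ∉ U ∪ A ∧ x ∉ Q.dom ∧ U' = U ∪ H.unv ∧ A' = A ∪ H.anv := by
  generalize hQ : P.hered x H = Q at h
  cases h with
  | ax => exact absurd hQ PCtx.hered_ne_tc_nil
  | appES => exact absurd hQ.symm PCtx.appES_ne_hered
  | hered K h hUA hdom =>
    obtain ⟨hplug, rfl, rfl⟩ := PCtx.hered_inj.mp hQ
    exact ⟨_, _, _, h, hplug, hUA, hdom, rfl, rfl⟩

end RelaxedMEC

theorem MEC_unique_parameterization_general {P : PCtx} {U A U' A' : Finset ℕ}
    (h : RelaxedMEC P U A) (h' : RelaxedMEC P U' A') : U = U' ∧ A = A' := by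
  induction h generalizing U' A' with
  | ax H =>
    obtain ⟨rfl, rfl⟩ := h'.eq_of_tc_nil
    exact ⟨rfl, rfl⟩
  | appES x t _ ih =>
    obtain ⟨U₁, A₁, h₁, rfl, rfl⟩ := h'.exists_of_appES
    obtain ⟨rfl, rfl⟩ := ih h₁
    exact ⟨rfl, rfl⟩
  | hered H h hUA hdom ih =>
    obtain ⟨Q, U₁, A₁, h₁, hplug, hUA₁, hdom₁, rfl, rfl⟩ := h'.exists_of_hered
    obtain rfl := h.eq_of_plugT_var_eq h₁ hplug hdom hdom₁ hUA hUA₁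
    obtain ⟨rfl, rfl⟩ := ih h₁
    exact ⟨rfl, rfl⟩

/-- unique parameterization of multiplicative evaluation contexts. -/
theorem MEC_unique_parameterization :
    ∀ (P : PCtx) (U A U' A' : Finset ℕ), MEC P U A → MEC P U' A' → U = U' ∧ A = A' :=
  fun _ _ _ _ _ h h' => MEC_unique_parameterization_general h.relaxed h'.relaxed
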